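/- Let ν be a Lévy measure on ℝ^d (ν({0}) = 0, ∫min(1,|z|²)ν(dz) < ∞) and set ψ̃(x) = ∫(1 - cos⟨x,z⟩)ν(dz). Then for all r > 0: (1/(4(1+2d)))·∫min(1, (|z|r)²)ν(dz) ≤ sup_{|x| ≤ r} ψ̃(x) ≤ 2·∫min(1, (|z|r)²)ν(dz). -/

import Mathlib

open MeasureTheory Set
open scoped RealInnerProductSpace

/-- A measure for which some integrable function is nonzero almost everywhere is `σ`-finite. -/
theorem MeasureTheory.Integrable.sigmaFinite_of_ae_ne_zero {α : Type*} [MeasurableSpace α]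
    {μ : Measure α} {f : α → ℝ} (hf : Integrable f μ) (hne : ∀ᵐ x ∂μ, f x ≠ 0) :
    SigmaFinite μ := by
  obtain ⟨t, ht, hzero, hfin⟩ := hf.aefinStronglyMeasurable.exists_set_sigmaFinite
  have hae : ∀ᵐ x ∂μ, x ∈ t := by
    filter_upwards [hne, (ae_restrict_iff' ht.compl).1 hzero] with x hx hx'
    by_contra hxt
    exact hx (hx' hxt)
  rwa [Measure.restrict_eq_self_of_ae_mem hae] at hfin

theorem Real.one_sub_cos_le_two_mul_min (t : ℝ) : 1 - Real.cos t ≤ 2 * min 1 (t ^ 2) := by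
  rw [mul_min_of_nonneg _ _ (by norm_num)]
  refine le_min ?_ ?_
  · linarith [Real.neg_one_le_cos t]
  · nlinarith [Real.one_sub_sq_div_two_le_cos (x := t), sq_nonneg t]

theorem Real.min_one_sq_le_one_sub_sinc (u : ℝ) :
    min 1 (u ^ 2) ≤ 8 * (1 - Real.sinc u) := by
  wlog hu : 0 ≤ u generalizing u
  · simpa [Real.sinc_neg] using this (-u) (by linarith)
  rcases hu.eq_or_lt with rfl | hu
  · simp
  rw [Real.sinc_of_ne_zero hu.ne']
  have sin_one_le : Real.sin 1 ≤ 7 / 8 - 1 / 56 := by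
    have h := (abs_le.1 (Real.sin_bound (x := 1) (by simp))).2
    norm_num at h ⊢
    linarith
  rcases le_total u 1 with h1 | h1
  · refine (min_le_right _ _).trans ?_
    have h := (abs_le.1 (Real.sin_bound (x := u) (by rwa [abs_of_pos hu]))).2
    rw [abs_of_pos hu] at h
    have h5 : u ^ 5 ≤ u ^ 3 := pow_le_pow_of_le_one hu.le h1 (by norm_num)
    have hdiv : Real.sin u / u ≤ 1 - u ^ 2 / 8 := by
      rw [div_le_iff₀ hu]
      nlinarith [pow_pos hu 3]
    linarith
  · refine (min_le_left _ _).trans ?_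
    have hdiv : Real.sin u / u ≤ 7 / 8 := by
      rw [div_le_iff₀ hu]
      rcases le_total u (8 / 7) with h2 | h2
      · have h := (abs_le.1 (Real.abs_sin_sub_sin_le u 1)).2
        rw [abs_of_nonneg (by linarith)] at h
        linarith
      · linarith [Real.sin_le_one u]
    linarith

theorem Real.intervalIntegral_one_sub_cos_mul (u : ℝ) :
    ∫ t in (0 : ℝ)..1, (1 - Real.cos (t * u)) = 1 - Real.sinc u := by
  rcases eq_or_ne u 0 with rfl | hu
  · simp
  rw [intervalIntegral.integral_sub (by simp)
    (Continuous.intervalIntegrable (by fun_prop) _ _), intervalIntegral.integral_comp_mul_right _ hu]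
  simp [Real.sinc_of_ne_zero hu, div_eq_inv_mul]

section LevyMeasure

theorem integrable_min_one_norm_mul_sq {E : Type*} [NormedAddCommGroup E] [MeasurableSpace E]
    [BorelSpace E] {ν : Measure E} (hint : Integrable (fun z => min 1 (‖z‖ ^ 2)) ν) (r : ℝ) :
    Integrable (fun z => min 1 ((‖z‖ * r) ^ 2)) ν := by
  refine (hint.const_mul (max 1 (r ^ 2))).mono'
    (Continuous.aestronglyMeasurable (by fun_prop)) (.of_forall fun z => ?_)
  rw [Real.norm_of_nonneg (by positivity), mul_min_of_nonneg _ _ (by positivity), mul_pow, mul_one,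
    mul_comm (‖z‖ ^ 2)]
  gcongr
  · exact le_max_left _ _
  · exact le_max_right _ _

variable {E : Type*} [NormedAddCommGroup E] [InnerProductSpace ℝ E]

theorem one_sub_cos_inner_le {r : ℝ} {x : E} (hx : ‖x‖ ≤ r) (z : E) :
    1 - Real.cos ⟪x, z⟫ ≤ 2 * min 1 ((‖z‖ * r) ^ 2) := by
  refine (Real.one_sub_cos_le_two_mul_min _).trans ?_
  have h : ⟪x, z⟫ ^ 2 ≤ (‖z‖ * r) ^ 2 := by
    rw [← sq_abs]
    gcongr
    calc |⟪x, z⟫| ≤ ‖x‖ * ‖z‖ := abs_real_inner_le_norm x z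
      _ ≤ ‖z‖ * r := by rw [mul_comm]; gcongr
  gcongr

variable [MeasurableSpace E] [BorelSpace E] {ν : Measure E}

theorem integrable_one_sub_cos_inner (hint : Integrable (fun z => min 1 (‖z‖ ^ 2)) ν) (x : E) :
    Integrable (fun z => 1 - Real.cos ⟪x, z⟫) ν := by
  refine ((integrable_min_one_norm_mul_sq hint ‖x‖).const_mul 2).mono'
    (Continuous.aestronglyMeasurable (by fun_prop)) (.of_forall fun z => ?_)
  rw [Real.norm_of_nonneg (by linarith [Real.cos_le_one ⟪x, z⟫])]
  exact one_sub_cos_inner_le le_rfl z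

variable [SecondCountableTopology E] [SFinite ν]

theorem integrable_prod_one_sub_cos_mul_inner
    (hint : Integrable (fun z => min 1 (‖z‖ ^ 2)) ν) (x : E) :
    Integrable (fun p : ℝ × E => 1 - Real.cos (p.1 * ⟪x, p.2⟫))
      ((volume.restrict (Ioc 0 1)).prod ν) := by
  refine (((integrable_min_one_norm_mul_sq hint ‖x‖).const_mul 2).comp_snd _).mono'
    (Continuous.aestronglyMeasurable (by fun_prop)) ?_
  have hmem : ∀ᵐ p ∂((volume.restrict (Ioc (0 : ℝ) 1)).prod ν), p.1 ∈ Ioc (0 : ℝ) 1 :=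
    Measure.quasiMeasurePreserving_fst.ae (ae_restrict_mem measurableSet_Ioc)
  filter_upwards [hmem] with p hp
  rw [Real.norm_of_nonneg (by linarith [Real.cos_le_one (p.1 * ⟪x, p.2⟫)]),
    ← real_inner_smul_left]
  refine one_sub_cos_inner_le ?_ p.2
  rw [norm_smul, Real.norm_of_nonneg hp.1.le]
  exact mul_le_of_le_one_left (norm_nonneg x) hp.2

theorem integrable_one_sub_sinc_inner
    (hint : Integrable (fun z => min 1 (‖z‖ ^ 2)) ν) (x : E) :
    Integrable (fun z => 1 - Real.sinc ⟪x, z⟫) ν := by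
  simpa only [← intervalIntegral.integral_of_le zero_le_one,
    Real.intervalIntegral_one_sub_cos_mul] using
    (integrable_prod_one_sub_cos_mul_inner hint x).integral_prod_right

theorem integral_one_sub_sinc_inner_le
    (hint : Integrable (fun z => min 1 (‖z‖ ^ 2)) ν) {x : E} {M : ℝ}
    (hM : ∀ t ∈ Ioc (0 : ℝ) 1, ∫ z, (1 - Real.cos ⟪t • x, z⟫) ∂ν ≤ M) :
    ∫ z, (1 - Real.sinc ⟪x, z⟫) ∂ν ≤ M := by
  have hprod := integrable_prod_one_sub_cos_mul_inner hint x
  simp only [real_inner_smul_left] at hM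
  calc ∫ z, (1 - Real.sinc ⟪x, z⟫) ∂ν
      = ∫ t in Ioc (0 : ℝ) 1, ∫ z, (1 - Real.cos (t * ⟪x, z⟫)) ∂ν := by
        rw [integral_integral_swap hprod]
        simp only [← intervalIntegral.integral_of_le zero_le_one,
          Real.intervalIntegral_one_sub_cos_mul]
    _ ≤ ∫ _ in Ioc (0 : ℝ) 1, M :=
        setIntegral_mono_on hprod.integral_prod_left (by simp) measurableSet_Ioc hM
    _ = M := by simp

end LevyMeasure

theorem EuclideanSpace.min_one_norm_mul_sq_le {d : ℕ} (z : EuclideanSpace ℝ (Fin d)) (r : ℝ) :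
    min 1 ((‖z‖ * r) ^ 2) ≤
      ∑ i, 8 * (1 - Real.sinc ⟪EuclideanSpace.single i r, z⟫) := by
  have hle : ∀ i, min 1 ((r * z i) ^ 2) ≤
      8 * (1 - Real.sinc ⟪EuclideanSpace.single i r, z⟫) := fun i => by
    simpa [EuclideanSpace.inner_single_left, mul_comm] using
      Real.min_one_sq_le_one_sub_sinc (r * z i)
  refine le_trans ?_ (Finset.sum_le_sum fun i _ => hle i)
  by_cases h : ∃ i, 1 ≤ (r * z i) ^ 2
  · obtain ⟨i, hi⟩ := h
    calc min 1 ((‖z‖ * r) ^ 2) ≤ min 1 ((r * z i) ^ 2) := by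
          rw [min_eq_left hi]
          exact min_le_left _ _
      _ ≤ _ := Finset.single_le_sum (f := fun i => min 1 ((r * z i) ^ 2))
          (fun i _ => by positivity) (Finset.mem_univ i)
  · push Not at h
    refine (min_le_right _ _).trans_eq ?_
    rw [mul_pow, EuclideanSpace.real_norm_sq_eq, Finset.sum_mul]
    refine Finset.sum_congr rfl fun i _ => ?_
    rw [min_eq_right (h i).le]
    ring

/-- Two-sided bound for the supremum of the jump part of a symmetric characteristic
exponent in terms of the truncated second moment of the Lévy measure. -/
theorem stmt_7 {d : ℕ} (ν : Measure (EuclideanSpace ℝ (Fin d)))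
    (h0 : ν {0} = 0)
    (hint : Integrable (fun z => min 1 (‖z‖ ^ 2)) ν)
    (ψ : EuclideanSpace ℝ (Fin d) → ℝ)
    (hψ : ∀ x, ψ x = ∫ z, (1 - Real.cos ⟪x, z⟫) ∂ν) :
    ∀ r : ℝ, 0 < r →
      (1 / (4 * (1 + 2 * (d : ℝ)))) * ∫ z, min 1 ((‖z‖ * r) ^ 2) ∂ν ≤
        sSup (ψ '' {x | ‖x‖ ≤ r}) ∧
      sSup (ψ '' {x | ‖x‖ ≤ r}) ≤ 2 * ∫ z, min 1 ((‖z‖ * r) ^ 2) ∂ν := by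
  intro r hr
  have hne : ∀ᵐ z ∂ν, min 1 (‖z‖ ^ 2) ≠ 0 := by
    filter_upwards [compl_mem_ae_iff.2 h0] with z hz
    have : 0 < ‖z‖ := norm_pos_iff.2 hz
    positivity
  have := hint.sigmaFinite_of_ae_ne_zero hne
  have hbound : ∀ y ∈ ψ '' {x | ‖x‖ ≤ r}, y ≤ 2 * ∫ z, min 1 ((‖z‖ * r) ^ 2) ∂ν := by
    rintro _ ⟨x, hx, rfl⟩
    rw [hψ, ← integral_const_mul]
    exact integral_mono (integrable_one_sub_cos_inner hint x)
      ((integrable_min_one_norm_mul_sq hint r).const_mul 2) (one_sub_cos_inner_le hx)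
  have hzero : (0 : ℝ) ∈ ψ '' {x | ‖x‖ ≤ r} := ⟨0, by simpa using hr.le, by simp [hψ]⟩
  refine ⟨?_, csSup_le ⟨0, hzero⟩ hbound⟩
  set M := sSup (ψ '' {x | ‖x‖ ≤ r})
  have hM : ∀ x, ‖x‖ ≤ r → ψ x ≤ M := fun x hx =>
    le_csSup ⟨_, hbound⟩ (mem_image_of_mem ψ hx)
  have hM0 : 0 ≤ M := le_csSup ⟨_, hbound⟩ hzero
  have haxis : ∀ i : Fin d, ∫ z, (1 - Real.sinc ⟪EuclideanSpace.single i r, z⟫) ∂ν ≤ M := by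
    refine fun i => integral_one_sub_sinc_inner_le hint fun t ht => ?_
    rw [← hψ]
    refine hM _ ?_
    rw [norm_smul, PiLp.norm_single, Real.norm_of_nonneg ht.1.le,
      Real.norm_of_nonneg hr.le]
    exact mul_le_of_le_one_left hr.le ht.2
  have hsinc : ∀ i : Fin d,
      Integrable (fun z => 8 * (1 - Real.sinc ⟪EuclideanSpace.single i r, z⟫)) ν :=
    fun i => (integrable_one_sub_sinc_inner hint _).const_mul 8
  have hupper : ∫ z, min 1 ((‖z‖ * r) ^ 2) ∂ν ≤ 8 * d * M := by
    calc ∫ z, min 1 ((‖z‖ * r) ^ 2) ∂ν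
        ≤ ∫ z, ∑ i, 8 * (1 - Real.sinc ⟪EuclideanSpace.single i r, z⟫) ∂ν :=
          integral_mono (integrable_min_one_norm_mul_sq hint r)
            (integrable_finsetSum _ fun i _ => hsinc i)
            fun z => EuclideanSpace.min_one_norm_mul_sq_le z r
      _ = ∑ i : Fin d, 8 * ∫ z, (1 - Real.sinc ⟪EuclideanSpace.single i r, z⟫) ∂ν := by
          rw [integral_finsetSum _ fun i _ => hsinc i]
          simp only [integral_const_mul]
      _ ≤ ∑ _i : Fin d, 8 * M := by
          gcongr with i
          exact haxis i
      _ = 8 * d * M := by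
          simp
          ring
  rw [one_div, inv_mul_le_iff₀ (by positivity)]
  linarith
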